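/- The Mordell–Weil group E(ℚ) of the elliptic curve E over ℚ defined by y² = x³ − 60x + 176 (LMFDB label 576.e2) is isomorphic, as an abelian group, to ℤ × ℤ/2ℤ. -/

import Mathlib

/-- The elliptic curve over `ℚ` with LMFDB label 576.e2, `y² = x³ − 60x + 176`. -/
noncomputable def E576e2 : WeierstrassCurve.Affine ℚ :=
  { a₁ := 0, a₂ := 0, a₃ := 0, a₄ := -60, a₆ := 176 }

/-!
Translating the rational point `(4, 0)` of order two to the origin turns the curve into
`A : y² = x(x² + 12x - 12)`, with `T = (0, 0)` and `G = (-2, 8)`. A descent via the 2-isogeny to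
`y² = x(x² - 24x + 192)` shows `A(ℚ) = 2A(ℚ) + ⟨T, G⟩`: the class of `x` in `ℚˣ / (ℚˣ)²` is one of
`1, -2, -3, 6`, the values on `⟨T, G⟩` (`T` has class `-12`), and points of class `1` are halved
explicitly. In particular `A(ℚ) / 2A(ℚ)` is finite, so `A(ℚ)` is finitely generated by the
approximate parallelogram law for the naïve height. The doubling formula strictly lowers the 2-adic
valuation of an `x`-coordinate that is a nonzero square, so the points with such an `x`-coordinate
have infinite order. As every double of a point other than `0` and `T` is of this kind, the torsion
subgroup is `{0, T}`. Hence `G` has infinite order, and since it generates `A(ℚ)` modulo torsion and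
`2A(ℚ)`, the rank is one.
-/

/-! ### Abelian groups of rank one -/

section RankOne
open Submodule
variable {R M : Type*} [CommRing R] [AddCommGroup M] [Module R M]

lemma subsingleton_of_basis_of_forall_eq_smul_add_smul {ι : Type*} (b : Module.Basis ι R M) {p : R}
    (hp : ¬ IsUnit p) {g : M} (hg : ∀ m, ∃ (r : R) (m' : M), m = r • g + p • m') :
    Subsingleton ι := by
  refine ⟨fun i j ↦ by_contra fun hij ↦ hp ?_⟩
  obtain ⟨r, m, hm⟩ := hg (b i)
  obtain ⟨s, n, hn⟩ := hg (b j)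
  have hmi : 1 = r * b.repr g i + p * b.repr m i := by
    simpa using congr(b.repr $hm i)
  have hmj : 0 = r * b.repr g j + p * b.repr m j := by
    simpa [Finsupp.single_apply, hij] using congr(b.repr $hm j)
  have hni : 0 = s * b.repr g i + p * b.repr n i := by
    simpa [Finsupp.single_apply, Ne.symm hij] using congr(b.repr $hn i)
  have hnj : 1 = s * b.repr g j + p * b.repr n j := by
    simpa using congr(b.repr $hn j)
  -- The identity matrix has determinant `1`, but its rank modulo `p` would be at most one.
  refine .of_mul_eq_one (b.repr m i + b.repr n j - p * b.repr m i * b.repr n j +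
    p * b.repr m j * b.repr n i) ?_
  grind

variable [IsDomain R] [IsPrincipalIdealRing R]

theorem nonempty_equiv_prod_torsion [Module.Finite R M] {p : R} (hp : ¬ IsUnit p) {g : M}
    (hg : g ∉ torsion R M)
    (hspan : ∀ m, ∃ (r : R) (m' t : M), t ∈ torsion R M ∧ m = r • g + p • m' + t) :
    Nonempty (M ≃ₗ[R] torsion R M × R) := by
  let b := Module.Free.chooseBasis R (M ⧸ torsion R M)
  have : Subsingleton (Module.Free.ChooseBasisIndex R (M ⧸ torsion R M)) := by
    refine subsingleton_of_basis_of_forall_eq_smul_add_smul b hp (g := mkQ _ g) fun m ↦ ?_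
    obtain ⟨m, rfl⟩ := mkQ_surjective _ m
    obtain ⟨r, m', t, ht, rfl⟩ := hspan m
    exact ⟨r, mkQ _ m', by simp [(Quotient.mk_eq_zero _).mpr ht]⟩
  have : Nontrivial (M ⧸ torsion R M) := ⟨mkQ _ g, 0, by simpa using hg⟩
  obtain ⟨i⟩ := b.index_nonempty
  obtain ⟨f, hf⟩ := (mkQ (torsion R M)).exists_rightInverse_of_surjective (range_mkQ _)
  exact ⟨(lequivProdOfRightSplitExact (torsion R M).injective_subtype (by simp) hf).symm ≪≫ₗ
    (LinearEquiv.refl _ _).prodCongr (b.repr ≪≫ₗ Finsupp.uniqueLinearEquiv R R i)⟩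

end RankOne

section DoublingMap
variable {A : Type*} [AddCommGroup A]

lemma finiteIndex_range_nsmul_of_sup_closure_eq_top {n : ℕ} (hn : n ≠ 0) {S : Set A}
    (hS : S.Finite) (h : (nsmulAddMonoidHom (α := A) n).range ⊔ AddSubgroup.closure S = ⊤) :
    (nsmulAddMonoidHom (α := A) n).range.FiniteIndex := by
  set H := (nsmulAddMonoidHom (α := A) n).range
  have hfg : AddGroup.FG (A ⧸ H) := by
    refine AddGroup.fg_iff.mpr ⟨QuotientAddGroup.mk' H '' S, ?_, hS.image _⟩
    rw [← AddMonoidHom.map_closure]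
    have := congr(AddSubgroup.map (QuotientAddGroup.mk' H) $h)
    rwa [AddSubgroup.map_sup, (AddSubgroup.map_eq_bot_iff _).mpr (QuotientAddGroup.ker_mk' H).ge,
      bot_sup_eq, ← AddMonoidHom.range_eq_map, QuotientAddGroup.range_mk'] at this
  have htors : IsAddTorsion (A ⧸ H) := by
    rintro ⟨a⟩
    refine isOfFinAddOrder_iff_nsmul_eq_zero.mpr ⟨n, hn.bot_lt, ?_⟩
    exact (QuotientAddGroup.eq_zero_iff _).mpr ⟨a, rfl⟩
  have := AddCommGroup.finite_of_fg_isAddTorsion _ htors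
  exact AddSubgroup.finiteIndex_of_finite_quotient

lemma not_isOfFinAddOrder_of_add_self_lt {α : Type*} [Preorder α] {S : Set A} (φ : A → α)
    (hS : ∀ a ∈ S, a + a ∈ S ∧ φ (a + a) < φ a) {a : A} (ha : a ∈ S) : ¬ IsOfFinAddOrder a := by
  have hmem (n : ℕ) : 2 ^ n • a ∈ S := by
    induction n with
    | zero => simpa
    | succ n ih => simpa [pow_succ, mul_comm, mul_nsmul, two_nsmul] using (hS _ ih).1
  have hanti : StrictAnti fun n : ℕ ↦ φ (2 ^ n • a) := strictAnti_nat_of_succ_lt fun n ↦ by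
    simpa [pow_succ, mul_comm, mul_nsmul, two_nsmul] using (hS _ (hmem n)).2
  intro hfin
  have hinj : Function.Injective fun n : ℕ ↦ 2 ^ n • a := .of_comp (f := φ) hanti.injective
  exact Set.infinite_range_of_injective hinj (hfin.finite_multiples.subset
    (Set.range_subset_iff.mpr fun n ↦ ⟨2 ^ n, rfl⟩))

end DoublingMap

/-! ### The parallelogram law and finite generation -/

section AddSubMap
open WeierstrassCurve WeierstrassCurve.Affine WeierstrassCurve.Affine.Point

variable {F : Type*} [Field F] {W : Affine F}

lemma eval_addSubMap_vec (W : Affine F) (s t u : F) :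
    (fun i ↦ (addSubMap W i).eval ![s, t, u]) =
      ![s ^ 2 - W.b₄ * s * u - W.b₆ * t * u - W.b₈ * u ^ 2,
        2 * t * s + W.b₂ * s * u + W.b₄ * t * u + W.b₆ * u ^ 2, t ^ 2 - 4 * s * u] := by
  ext i
  fin_cases i <;> simp [addSubMap]

lemma eval_addSubMap_sym2x_some_self {x y : F} (h : W.Nonsingular x y) :
    (fun i ↦ (addSubMap W i).eval ((some x y h).sym2x (some x y h))) =
      ![x ^ 4 - W.b₄ * x ^ 2 - 2 * W.b₆ * x - W.b₈, (y - W.negY x y) ^ 2, 0] := by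
  have e := (W.equation_iff ..).mp h.left
  rw [sym2x_some_some, eval_addSubMap_vec, negY]
  simp only [Matrix.vecCons_inj, and_true, mul_one, WeierstrassCurve.b₂, WeierstrassCurve.b₄,
    WeierstrassCurve.b₆, WeierstrassCurve.b₈]
  exact ⟨by ring, by linear_combination (-4) * e, by ring⟩

variable [DecidableEq F]

lemma sub_mul_slope_add_slope_negY {x₁ x₂ : F} (y₁ y₂ : F) (hx : x₁ ≠ x₂) :
    (x₁ - x₂) * (W.slope x₁ x₂ y₁ y₂ + W.slope x₁ x₂ y₁ (W.negY x₂ y₂)) =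
      2 * y₁ + W.a₁ * x₂ + W.a₃ := by
  have hd : x₁ - x₂ ≠ 0 := sub_ne_zero.mpr hx
  rw [slope_of_X_ne hx, slope_of_X_ne hx, negY]
  field_simp
  ring

lemma sub_mul_slope_mul_slope_negY {x₁ y₁ x₂ y₂ : F} (h₁ : W.Equation x₁ y₁)
    (h₂ : W.Equation x₂ y₂) (hx : x₁ ≠ x₂) :
    (x₁ - x₂) * (W.slope x₁ x₂ y₁ y₂ * W.slope x₁ x₂ y₁ (W.negY x₂ y₂)) =
      x₁ ^ 2 + x₁ * x₂ + x₂ ^ 2 + W.a₂ * (x₁ + x₂) + W.a₄ - W.a₁ * y₁ := by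
  have hd : x₁ - x₂ ≠ 0 := sub_ne_zero.mpr hx
  rw [slope_of_X_ne hx, slope_of_X_ne hx, negY]
  field_simp
  linear_combination (W.equation_iff ..).mp h₁ - (W.equation_iff ..).mp h₂

lemma eval_addSubMap_sym2x_of_X_ne {x₁ y₁ x₂ y₂ : F} (h₁ : W.Nonsingular x₁ y₁)
    (h₂ : W.Nonsingular x₂ y₂) (hx : x₁ ≠ x₂) :
    (fun i ↦ (addSubMap W i).eval ((some x₁ y₁ h₁).sym2x (some x₂ y₂ h₂))) =
      (x₁ - x₂) ^ 2 •
        (some x₁ y₁ h₁ + some x₂ y₂ h₂).sym2x (some x₁ y₁ h₁ - some x₂ y₂ h₂) := by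
  have e₁ := (W.equation_iff ..).mp h₁.left
  have hadd := sub_mul_slope_add_slope_negY (W := W) y₁ y₂ hx
  have hmul := sub_mul_slope_mul_slope_negY h₁.left h₂.left hx
  rw [sub_eq_add_neg (some x₁ y₁ h₁), neg_some, add_of_X_ne hx, add_of_X_ne hx, sym2x_some_some,
    sym2x_some_some, eval_addSubMap_vec, addX, addX]
  generalize W.slope x₁ x₂ y₁ y₂ = l, W.slope x₁ x₂ y₁ (W.negY x₂ y₂) = m at hadd hmul ⊢
  simp only [Matrix.smul_cons, smul_eq_mul, Matrix.smul_empty, Matrix.vecCons_inj, and_true,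
    mul_one, WeierstrassCurve.b₂, WeierstrassCurve.b₄, WeierstrassCurve.b₆, WeierstrassCurve.b₈]
  refine ⟨?_, ?_, by ring⟩
  · have hprod (c : F) : (x₁ - x₂) ^ 2 * ((l ^ 2 + W.a₁ * l - c) * (m ^ 2 + W.a₁ * m - c)) =
        ((x₁ - x₂) * (l * m)) ^ 2 + W.a₁ * ((x₁ - x₂) * (l * m)) * ((x₁ - x₂) * (l + m)) +
        W.a₁ ^ 2 * (x₁ - x₂) * ((x₁ - x₂) * (l * m)) + (c * (x₁ - x₂)) ^ 2 -
        c * (((x₁ - x₂) * (l + m)) ^ 2 - 2 * (x₁ - x₂) * ((x₁ - x₂) * (l * m)) +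
          W.a₁ * (x₁ - x₂) * ((x₁ - x₂) * (l + m))) := by ring
    simp only [sub_sub _ _ x₁, sub_sub _ _ x₂]
    rw [hprod, hadd, hmul]
    linear_combination (W.a₁ ^ 2 + 4 * (W.a₂ + x₁ + x₂)) * e₁
  · linear_combination -4 * e₁ + 2 * (x₁ - x₂) * hmul -
      ((x₁ - x₂) * (l + m + W.a₁) + 2 * y₁ + W.a₁ * x₂ + W.a₃) * hadd

lemma sq_mul_addX_slope_self {x y : F} (h : W.Equation x y) (hy : y ≠ W.negY x y) :
    (y - W.negY x y) ^ 2 * W.addX x x (W.slope x x y y) =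
      x ^ 4 - W.b₄ * x ^ 2 - 2 * W.b₆ * x - W.b₈ := by
  have hd : y - W.negY x y ≠ 0 := sub_ne_zero.mpr hy
  have e := (W.equation_iff ..).mp h
  rw [addX, slope_of_Y_ne rfl hy]
  field_simp
  simp only [negY, WeierstrassCurve.b₄, WeierstrassCurve.b₆, WeierstrassCurve.b₈]
  linear_combination (-(8 * x + 4 * W.a₂ + W.a₁ ^ 2)) * e

lemma eval_addSubMap_sym2x_self [W.IsElliptic] (P : W.Point) :
    ∃ k : F, k ≠ 0 ∧ (fun i ↦ (addSubMap W i).eval (P.sym2x P)) = k • (P + P).sym2x 0 := by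
  rcases P with _ | ⟨x, y, h⟩
  · exact ⟨1, one_ne_zero, by simp [← zero_def, eval_addSubMap_vec]⟩
  have hne := addSubMap_ne_zero W (sym2x_ne_zero (some x y h) (some x y h))
  rw [eval_addSubMap_sym2x_some_self] at hne ⊢
  by_cases hy : y = W.negY x y
  · simp only [add_self_of_Y_eq hy, sym2x_zero_zero, sub_eq_zero.mpr hy] at hne ⊢
    exact ⟨x ^ 4 - W.b₄ * x ^ 2 - 2 * W.b₆ * x - W.b₈, fun h0 ↦ hne (by simp [h0]), by simp⟩
  · refine ⟨_, pow_ne_zero 2 (sub_ne_zero.mpr hy), ?_⟩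
    rw [add_self_of_Y_ne hy, sym2x_some_zero, ← sq_mul_addX_slope_self h.left hy]
    simp

lemma exists_eval_addSubMap_sym2x_eq_smul [W.IsElliptic] (P Q : W.Point) :
    ∃ k : F, k ≠ 0 ∧
      (fun i ↦ (addSubMap W i).eval (P.sym2x Q)) = k • (P + Q).sym2x (P - Q) := by
  rcases eq_or_ne P Q with rfl | hPQ
  · simpa only [sub_self] using eval_addSubMap_sym2x_self P
  rcases eq_or_ne P (-Q) with rfl | hPQ'
  · obtain ⟨k, hk, h⟩ := eval_addSubMap_sym2x_self Q
    refine ⟨k, hk, ?_⟩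
    rw [sym2x_neg_left, neg_add_cancel, ← neg_add', sym2x_neg_right, sym2x_comm 0, h]
  rcases P with _ | ⟨x₁, y₁, h₁⟩ <;> rcases Q with _ | ⟨x₂, y₂, h₂⟩
  · exact absurd rfl hPQ
  · refine ⟨1, one_ne_zero, ?_⟩
    rw [← zero_def, zero_add, zero_sub, sym2x_neg_right, sym2x_zero_some, sym2x_some_some,
      eval_addSubMap_vec, one_smul]
    ring_nf
  · refine ⟨1, one_ne_zero, ?_⟩
    rw [← zero_def, add_zero, sub_zero, sym2x_some_zero, sym2x_some_some, eval_addSubMap_vec,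
      one_smul]
    ring_nf
  · have hx : x₁ ≠ x₂ := fun hx ↦ (X_eq_iff.mp hx).elim hPQ hPQ'
    exact ⟨_, pow_ne_zero 2 (sub_ne_zero.mpr hx), eval_addSubMap_sym2x_of_X_ne h₁ h₂ hx⟩

end AddSubMap

section NaiveHeight
open WeierstrassCurve WeierstrassCurve.Affine WeierstrassCurve.Affine.Point Height

variable {K : Type*} [Field K] [AdmissibleAbsValues K] {W : Affine K}

/-- The naïve logarithmic height of a point. -/
noncomputable def naiveHeight (P : W.Point) : ℝ := logHeight P.xRep

variable (W) in
lemma exists_abs_logHeight_sym2x_sub_le :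
    ∃ C, ∀ P Q : W.Point, |logHeight (P.sym2x Q) - (naiveHeight P + naiveHeight Q)| ≤ C := by
  obtain ⟨C, hC⟩ := abs_logHeight_sym2_sub_le K
  have eta (v : Fin 2 → K) : ![v 0, v 1] = v := by ext i; fin_cases i <;> rfl
  refine ⟨C, fun P Q ↦ ?_⟩
  simpa only [eta, sym2x, naiveHeight] using
    hC ((eta P.xRep).trans_ne P.xRep_ne_zero) ((eta Q.xRep).trans_ne Q.xRep_ne_zero)

variable (W) in
theorem exists_abs_naiveHeight_parallelogram_le [DecidableEq K] [W.IsElliptic] :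
    ∃ C, ∀ P Q : W.Point, |naiveHeight (P + Q) + naiveHeight (P - Q)
      - 2 * (naiveHeight P + naiveHeight Q)| ≤ C := by
  obtain ⟨C₁, h₁⟩ := exists_abs_logHeight_sym2x_sub_le W
  obtain ⟨C₂, h₂⟩ := abs_logHeight_addSubMap_sub_two_mul_logHeight_le W
  refine ⟨3 * C₁ + C₂, fun P Q ↦ ?_⟩
  obtain ⟨k, hk, hPQ⟩ := exists_eval_addSubMap_sym2x_eq_smul P Q
  have h₃ := h₂ (P.sym2x Q)
  rw [hPQ, logHeight_smul_eq_logHeight _ hk] at h₃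
  grind [h₁ P Q, h₁ (P + Q) (P - Q)]

instance [Northcott (logHeight₁ (K := K))] : Northcott (naiveHeight (W := W)) where
  finite_le b := by
    have hfib (v : Fin 2 → K) : {P : W.Point | P.xRep = v}.Finite := by
      rcases Set.eq_empty_or_nonempty {P : W.Point | P.xRep = v} with h | ⟨Q, rfl⟩
      · exact h ▸ Set.finite_empty
      · exact (Set.toFinite {Q, -Q}).subset fun P hP ↦ eq_or_eq_neg_of_xRep_eq_xRep hP
    refine ((((Northcott.finite_le (h := logHeight₁ (K := K)) b).image (![·, 1])).insert
      ![1, 0]).preimage' fun v _ ↦ hfib v).subset ?_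
    rintro (_ | ⟨x, y, h⟩) hP
    · exact .inl rfl
    · exact .inr ⟨x, (logHeight₁_eq_logHeight x).trans_le hP, rfl⟩

theorem fg_point_of_finiteIndex [DecidableEq K] [Northcott (logHeight₁ (K := K))] [W.IsElliptic]
    (h : (nsmulAddMonoidHom (α := W.Point) 2).range.FiniteIndex) : AddGroup.FG W.Point := by
  obtain ⟨C, hC⟩ := exists_abs_naiveHeight_parallelogram_le W
  exact AddCommGroup.fg_of_descent' (h := naiveHeight) h (fun P ↦ logHeight_nonneg _) hC

end NaiveHeight

/-! ### Admissible changes of variables -/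

section VariableChange
open WeierstrassCurve WeierstrassCurve.Affine WeierstrassCurve.Affine.Point

variable {F : Type*} [Field F] {C : VariableChange F} {W : Affine F}

lemma equation_variableChange_iff {x y : F} :
    (C • W : Affine F).Equation x y ↔
      W.Equation (C.u ^ 2 * x + C.r) (C.u ^ 3 * y + C.u ^ 2 * C.s * x + C.t) := by
  have hu := C.u.ne_zero
  simp only [equation_iff, variableChange_a₁, variableChange_a₂, variableChange_a₃,
    variableChange_a₄, variableChange_a₆, Units.val_inv_eq_inv_val]
  rw [← sub_eq_zero, ← sub_eq_zero (b := _ + _ + _ + W.a₆),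
    ← mul_eq_zero_iff_left (pow_ne_zero 6 hu)]
  field_simp
  ring_nf

lemma nonsingular_variableChange_iff {x y : F} :
    (C • W : Affine F).Nonsingular x y ↔
      W.Nonsingular (C.u ^ 2 * x + C.r) (C.u ^ 3 * y + C.u ^ 2 * C.s * x + C.t) := by
  have hu := C.u.ne_zero
  rw [nonsingular_iff, nonsingular_iff, equation_variableChange_iff]
  refine and_congr_right fun _ ↦ ?_
  simp only [variableChange_a₁, variableChange_a₂, variableChange_a₃, variableChange_a₄,
    Units.val_inv_eq_inv_val]
  rw [← not_and_or, ← not_and_or, not_iff_not]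
  field_simp
  constructor <;> rintro ⟨h₁, h₂⟩ <;> constructor
  · linear_combination h₁ - C.s * h₂
  · linear_combination h₂
  · linear_combination h₁ + C.s * h₂
  · linear_combination h₂

lemma negY_variableChange (x y : F) :
    W.negY (C.u ^ 2 * x + C.r) (C.u ^ 3 * y + C.u ^ 2 * C.s * x + C.t) =
      C.u ^ 3 * (C • W : Affine F).negY x y + C.u ^ 2 * C.s * x + C.t := by
  have hu := C.u.ne_zero
  simp only [negY, variableChange_a₁, variableChange_a₃, Units.val_inv_eq_inv_val]
  field_simp
  ring

lemma addX_variableChange (x₁ x₂ l : F) :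
    W.addX (C.u ^ 2 * x₁ + C.r) (C.u ^ 2 * x₂ + C.r) (C.u * l + C.s) =
      C.u ^ 2 * (C • W : Affine F).addX x₁ x₂ l + C.r := by
  have hu := C.u.ne_zero
  simp only [addX, variableChange_a₁, variableChange_a₂, Units.val_inv_eq_inv_val]
  field_simp
  ring

lemma addY_variableChange (x₁ x₂ y₁ l : F) :
    W.addY (C.u ^ 2 * x₁ + C.r) (C.u ^ 2 * x₂ + C.r) (C.u ^ 3 * y₁ + C.u ^ 2 * C.s * x₁ + C.t)
        (C.u * l + C.s) =
      C.u ^ 3 * (C • W : Affine F).addY x₁ x₂ y₁ l +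
        C.u ^ 2 * C.s * (C • W : Affine F).addX x₁ x₂ l + C.t := by
  rw [addY, addY, ← negY_variableChange, negAddY, negAddY, addX_variableChange]
  congr 1
  ring

variable [DecidableEq F]

lemma slope_variableChange {x₁ x₂ y₁ y₂ : F} (h₁ : (C • W : Affine F).Equation x₁ y₁)
    (h₂ : (C • W : Affine F).Equation x₂ y₂)
    (hxy : ¬ (x₁ = x₂ ∧ y₁ = (C • W : Affine F).negY x₂ y₂)) :
    W.slope (C.u ^ 2 * x₁ + C.r) (C.u ^ 2 * x₂ + C.r)
      (C.u ^ 3 * y₁ + C.u ^ 2 * C.s * x₁ + C.t) (C.u ^ 3 * y₂ + C.u ^ 2 * C.s * x₂ + C.t) =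
      C.u * (C • W : Affine F).slope x₁ x₂ y₁ y₂ + C.s := by
  have hu := C.u.ne_zero
  by_cases hx : x₁ = x₂
  · obtain rfl := hx
    have hy : y₁ ≠ (C • W : Affine F).negY x₁ y₂ := fun hy ↦ hxy ⟨rfl, hy⟩
    obtain rfl := Y_eq_of_Y_ne h₁ h₂ rfl hy
    have hd : y₁ - (C • W : Affine F).negY x₁ y₁ ≠ 0 := sub_ne_zero.mpr hy
    have hy' : C.u ^ 3 * y₁ + C.u ^ 2 * C.s * x₁ + C.t ≠
        W.negY (C.u ^ 2 * x₁ + C.r) (C.u ^ 3 * y₁ + C.u ^ 2 * C.s * x₁ + C.t) := by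
      rwa [negY_variableChange, ne_eq, add_left_inj, add_left_inj,
        mul_right_inj' (pow_ne_zero 3 hu)]
    rw [slope_of_Y_ne rfl hy, slope_of_Y_ne rfl hy', negY_variableChange,
      add_sub_add_right_eq_sub, add_sub_add_right_eq_sub, ← mul_sub]
    field_simp
    simp only [negY, variableChange_a₁, variableChange_a₂, variableChange_a₃, variableChange_a₄,
      Units.val_inv_eq_inv_val]
    field_simp
    ring
  · rw [slope_of_X_ne hx, slope_of_X_ne (by simpa),
      add_sub_add_right_eq_sub, add_sub_add_right_eq_sub, ← mul_sub]
    have := sub_ne_zero.mpr hx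
    field_simp
    ring

variable (C W)

/-- The homomorphism between the point groups of two curves related by an admissible change of
variables, `(x, y) ↦ (u²x + r, u³y + u²sx + t)` on affine points. -/
noncomputable def variableChangePointHom : (C • W : Affine F).Point →+ W.Point where
  toFun P := match P with
    | 0 => 0
    | .some _ _ h => .some _ _ (nonsingular_variableChange_iff.mp h)
  map_zero' := rfl
  map_add' := by
    rintro (_ | ⟨x₁, y₁, h₁⟩) (_ | ⟨x₂, y₂, h₂⟩)
    any_goals rfl
    by_cases h : x₁ = x₂ ∧ y₁ = (C • W : Affine F).negY x₂ y₂
    · simp only [add_of_Y_eq h.1 h.2]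
      rw [add_of_Y_eq (by rw [h.1]) (by rw [negY_variableChange, h.2, h.1])]
    · simp only [add_some h]
      rw [add_some]
      swap
      · rw [negY_variableChange]
        rintro ⟨hx, hy⟩
        obtain rfl : x₁ = x₂ := by simpa using hx
        exact h ⟨rfl, by
          simpa only [add_left_inj, mul_right_inj' (pow_ne_zero 3 C.u.ne_zero)] using hy⟩
      simp only [slope_variableChange h₁.left h₂.left h, addX_variableChange, addY_variableChange]

lemma variableChangePointHom_bijective : Function.Bijective (variableChangePointHom C W) := by
  have hu := C.u.ne_zero
  constructor
  · refine (injective_iff_map_eq_zero _).mpr ?_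
    rintro (_ | ⟨x, y, hP⟩) h
    · rfl
    · exact absurd h (some_ne_zero (nonsingular_variableChange_iff.mp hP))
  · rintro (_ | ⟨x, y, h⟩)
    · exact ⟨0, rfl⟩
    · have hx : x = C.u ^ 2 * ((x - C.r) / C.u ^ 2) + C.r := by field_simp; ring
      have hy : y = C.u ^ 3 * ((y - C.s * (x - C.r) - C.t) / C.u ^ 3) +
          C.u ^ 2 * C.s * ((x - C.r) / C.u ^ 2) + C.t := by field_simp; ring
      have hP : (C • W : Affine F).Nonsingular _ _ :=
        nonsingular_variableChange_iff.mpr (by rwa [← hx, ← hy])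
      refine ⟨some _ _ hP, ?_⟩
      simp [variableChangePointHom, ← hx, ← hy]

end VariableChange

/-! ### Curves with a rational point of order two -/

section TwoTorsion
open WeierstrassCurve WeierstrassCurve.Affine WeierstrassCurve.Affine.Point

variable {F : Type*} [Field F] {a b : F}

variable (a b) in
/-- The Weierstrass curve `y² = x(x² + ax + b)`, the normal form of a curve with a rational point
of order two, here placed at the origin. -/
def twoTorsionCurve : Affine F := ⟨0, a, 0, b, 0⟩

lemma twoTorsionCurve_Δ : (twoTorsionCurve a b).Δ = 16 * b ^ 2 * (a ^ 2 - 4 * b) := by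
  simp only [twoTorsionCurve, WeierstrassCurve.Δ, WeierstrassCurve.b₂, WeierstrassCurve.b₄,
    WeierstrassCurve.b₆, WeierstrassCurve.b₈]
  ring

lemma equation_twoTorsionCurve {x y : F} :
    (twoTorsionCurve a b).Equation x y ↔ y ^ 2 = x * (x ^ 2 + a * x + b) := by
  rw [equation_iff]
  simp only [twoTorsionCurve]
  ring_nf

lemma negY_twoTorsionCurve (x y : F) : (twoTorsionCurve a b).negY x y = -y := by
  simp [negY, twoTorsionCurve]

lemma twoTorsionCurve_discr_ne_zero [(twoTorsionCurve a b).IsElliptic] :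
    16 * b ^ 2 * (a ^ 2 - 4 * b) ≠ 0 :=
  twoTorsionCurve_Δ (a := a) (b := b) ▸ (isUnit_Δ (twoTorsionCurve a b)).ne_zero

variable (a b) in
/-- The rational point `(0, 0)` of order two on `y² = x(x² + ax + b)`. -/
def twoTorsionPoint [(twoTorsionCurve a b).IsElliptic] : (twoTorsionCurve a b).Point :=
  .mk (x := 0) (y := 0) (equation_twoTorsionCurve.mpr (by ring))

lemma eq_twoTorsionPoint [(twoTorsionCurve a b).IsElliptic] {y : F}
    (h : (twoTorsionCurve a b).Nonsingular 0 y) : some 0 y h = twoTorsionPoint a b := by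
  obtain rfl : y = 0 := by simpa using equation_twoTorsionCurve.mp h.left
  rfl

variable [DecidableEq F]

lemma isSquare_mul_X_of_add_eq {x₁ y₁ x₂ y₂ x₃ y₃ : F}
    {h₁ : (twoTorsionCurve a b).Nonsingular x₁ y₁} {h₂ : (twoTorsionCurve a b).Nonsingular x₂ y₂}
    {h₃ : (twoTorsionCurve a b).Nonsingular x₃ y₃}
    (h : some x₁ y₁ h₁ + some x₂ y₂ h₂ = some x₃ y₃ h₃) : IsSquare (x₁ * x₂ * x₃) := by
  have hxy : ¬ (x₁ = x₂ ∧ y₁ = (twoTorsionCurve a b).negY x₂ y₂) := fun hxy ↦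
    some_ne_zero h₃ (h ▸ add_of_Y_eq hxy.1 hxy.2)
  -- Up to sign, the `x`-coordinates are the roots of `x(x² + ax + b) - (lx + m)²`.
  have heval := congr(($(addPolynomial_slope h₁.left h₂.left hxy)).eval 0)
  rw [add_some hxy, some.injEq] at h
  rw [h.1] at heval
  generalize (twoTorsionCurve a b).slope x₁ x₂ y₁ y₂ = l at heval
  rw [addPolynomial_eq] at heval
  simp only [twoTorsionCurve, Cubic.toPoly, Polynomial.eval_neg, Polynomial.eval_add,
    Polynomial.eval_sub, Polynomial.eval_mul, Polynomial.eval_pow, Polynomial.eval_C,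
    Polynomial.eval_X] at heval
  exact ⟨y₁ - l * x₁, by linear_combination -heval⟩

lemma sq_mul_X_of_add_self_eq {x y x' y' : F} {h : (twoTorsionCurve a b).Nonsingular x y}
    {h' : (twoTorsionCurve a b).Nonsingular x' y'}
    (hadd : some x y h + some x y h = some x' y' h') :
    (2 * y) ^ 2 * x' = (x ^ 2 - b) ^ 2 := by
  have hy : y ≠ (twoTorsionCurve a b).negY x y := fun hy ↦
    some_ne_zero h' (hadd ▸ add_self_of_Y_eq hy)
  have hx := sq_mul_addX_slope_self h.left hy
  rw [add_self_of_Y_ne hy, some.injEq] at hadd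
  rw [hadd.1, negY_twoTorsionCurve] at hx
  simp only [twoTorsionCurve, WeierstrassCurve.b₄, WeierstrassCurve.b₆, WeierstrassCurve.b₈] at hx
  linear_combination hx

variable [(twoTorsionCurve a b).IsElliptic]

lemma twoTorsionPoint_add_self : twoTorsionPoint a b + twoTorsionPoint a b = 0 :=
  add_self_of_Y_eq (by rw [negY_twoTorsionCurve, _root_.neg_zero])

lemma exists_add_twoTorsionPoint_eq {x y : F} (h : (twoTorsionCurve a b).Nonsingular x y)
    (hx : x ≠ 0) : ∃ y' h', some x y h + twoTorsionPoint a b = some (b / x) y' h' := by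
  have hy := equation_twoTorsionCurve.mp h.left
  have hX : (twoTorsionCurve a b).addX x 0 ((twoTorsionCurve a b).slope x 0 y 0) = b / x := by
    rw [slope_of_X_ne hx, addX, sub_zero, sub_zero]
    simp only [twoTorsionCurve]
    field_simp
    linear_combination x * hy
  rw [← hX]
  exact ⟨_, _, add_of_X_ne hx⟩

lemma exists_add_self_eq {s t w : F} (h : (twoTorsionCurve a b).Nonsingular (s ^ 2) (s * t))
    (ht : t ^ 2 = s ^ 4 + a * s ^ 2 + b) (hw : w ^ 2 = 2 * s ^ 2 + a + 2 * t) :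
    ∃ R, R + R = some _ _ h := by
  have hΔ := twoTorsionCurve_discr_ne_zero (a := a) (b := b)
  -- The tangent line at the half-point `(x, y)` has slope `w + s` and passes through `(s², -st)`.
  obtain ⟨x, hx⟩ : ∃ x, x = s ^ 2 + t + s * w := ⟨_, rfl⟩
  obtain ⟨y, hy⟩ : ∃ y, y = w * x := ⟨_, rfl⟩
  have hxb : x * (s ^ 2 + t - s * w) = b := by
    rw [hx]; linear_combination ht - s ^ 2 * hw
  have hwd : w ^ 2 * (2 * s ^ 2 + a - 2 * t) = a ^ 2 - 4 * b := by
    linear_combination (2 * s ^ 2 + a - 2 * t) * hw - 4 * ht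
  have h2 : (2 : F) ≠ 0 := fun h2 ↦ hΔ (by linear_combination 8 * b ^ 2 * (a ^ 2 - 4 * b) * h2)
  have hx0 : x ≠ 0 := fun h0 ↦ hΔ (by rw [← hxb, h0]; ring)
  have hw0 : w ≠ 0 := fun h0 ↦ hΔ (by rw [← hwd, h0]; ring)
  have hR : (twoTorsionCurve a b).Equation x y := by
    rw [equation_twoTorsionCurve, hy]
    linear_combination x ^ 2 * hw + x * hxb - x ^ 2 * hx
  have hy' : y ≠ (twoTorsionCurve a b).negY x y := by
    rw [negY_twoTorsionCurve, ← sub_ne_zero, sub_neg_eq_add, ← two_mul, hy]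
    exact mul_ne_zero h2 (mul_ne_zero hw0 hx0)
  have hslope : (twoTorsionCurve a b).slope x x y y = w + s := by
    rw [slope_of_Y_ne rfl hy', div_eq_iff (sub_ne_zero.mpr hy'), negY_twoTorsionCurve, hy]
    simp only [twoTorsionCurve]
    linear_combination -hxb - 2 * x * hw + 3 * x * hx
  refine ⟨.mk hR, ?_⟩
  rw [Point.mk, add_self_of_Y_ne hy', some.injEq, hslope]
  have hX : (twoTorsionCurve a b).addX x x (w + s) = s ^ 2 := by
    simp only [addX, twoTorsionCurve]
    linear_combination hw - 2 * hx
  refine ⟨hX, ?_⟩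
  rw [addY, negAddY, hX, negY_twoTorsionCurve]
  linear_combination s * hx - hy

end TwoTorsion

/-! ### Two-coverings -/

section Descent

lemma exists_eq_squarefree_mul_sq (x : ℚ) : ∃ (g : ℤ) (t : ℚ), Squarefree g ∧ x = g * t ^ 2 := by
  obtain ⟨n, m, hnm, hn⟩ := Nat.sq_mul_squarefree (x.num * x.den).natAbs
  obtain ⟨g, hg, hgx⟩ : ∃ g : ℤ, Squarefree g ∧ x.num * x.den = g * m ^ 2 := by
    rcases Int.natAbs_eq (x.num * x.den) with h | h <;> rw [← hnm] at h <;> push_cast at h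
    · exact ⟨n, Int.squarefree_natCast.mpr hn, by rw [h, mul_comm]⟩
    · exact ⟨-n, Int.squarefree_natAbs.mp (by simpa), by rw [h]; ring⟩
  refine ⟨g, m / x.den, hg, ?_⟩
  have hgx : (x.num * x.den : ℚ) = g * m ^ 2 := mod_cast hgx
  rw [div_pow, ← mul_div_assoc, ← hgx,
    eq_div_iff (pow_ne_zero 2 (Nat.cast_ne_zero.mpr x.den_ne_zero)), ← Rat.mul_den_eq_num]
  ring

lemma exists_int_eq_of_squarefree_mul_sq {g n : ℤ} (hg : Squarefree g) {q : ℚ}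
    (h : g * q ^ 2 = n) : ∃ m : ℤ, q = m := by
  have hden : (q.den : ℚ) ≠ 0 := mod_cast q.den_ne_zero
  have hint : g * q.num ^ 2 = n * (q.den * q.den) := by
    rw [← Rat.num_div_den q] at h
    field_simp at h
    exact_mod_cast (by linear_combination h : (g : ℚ) * q.num ^ 2 = n * (q.den * q.den))
  have hdvd : (q.den * q.den : ℤ) ∣ g :=
    (q.isCoprime_num_den.symm.mul_left q.isCoprime_num_den.symm).pow_right.dvd_of_dvd_mul_right
      (Dvd.intro_left n hint.symm)
  have hunit : q.den = 1 := by simpa [Int.ofNat_isUnit] using hg _ hdvd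
  exact ⟨q.num, (Rat.coe_int_num_of_den_eq_one hunit).symm⟩

lemma squarefree_dvd_of_mul_sq_eq {R : Type*} [CommRing R] [IsDomain R] [IsPrincipalIdealRing R]
    {a b g N M e : R} (hg : Squarefree g) (hMe : IsCoprime M e) (hg0 : g ≠ 0)
    (h : g * N ^ 2 = g ^ 2 * M ^ 4 + a * g * M ^ 2 * e ^ 2 + b * e ^ 4) : g ∣ b := by
  have hge : IsCoprime g e := by
    refine isCoprime_of_prime_dvd (fun h ↦ hg0 h.1) ?_
    rintro p hp ⟨g', rfl⟩ ⟨e', rfl⟩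
    have hg' : ¬ p ∣ g' := fun ⟨k, hk⟩ ↦ hp.not_isUnit (hg p ⟨k, by rw [hk]; ring⟩)
    have h₁ : g' * N ^ 2 =
        p * (g' ^ 2 * M ^ 4 + p * (a * g' * M ^ 2 * e' ^ 2 + p * b * e' ^ 4)) :=
      mul_left_cancel₀ hp.ne_zero (by linear_combination h)
    obtain ⟨N', rfl⟩ := hp.dvd_of_dvd_pow ((hp.dvd_or_dvd ⟨_, h₁⟩).resolve_left hg')
    have h₂ : g' ^ 2 * M ^ 4 =
        p * (g' * N' ^ 2 - (a * g' * M ^ 2 * e' ^ 2 + p * b * e' ^ 4)) :=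
      mul_left_cancel₀ hp.ne_zero (by linear_combination -h₁)
    have hM : p ∣ M :=
      hp.dvd_of_dvd_pow ((hp.dvd_or_dvd ⟨_, h₂⟩).resolve_left fun h ↦ hg' (hp.dvd_of_dvd_pow h))
    exact hp.not_isUnit (hMe.isUnit_of_dvd' hM (dvd_mul_right p e'))
  exact hge.pow_right.dvd_of_dvd_mul_right (z := e ^ 4)
    ⟨N ^ 2 - g * M ^ 4 - a * M ^ 2 * e ^ 2, by linear_combination -h⟩

theorem exists_twoCovering {a b : ℤ} {x y : ℚ} (hx : x ≠ 0)
    (h : y ^ 2 = x * (x ^ 2 + a * x + b)) :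
    ∃ g c N M e : ℤ, Squarefree g ∧ g * c = b ∧ IsSquare (g * x) ∧ IsCoprime M e ∧
      N ^ 2 = g * M ^ 4 + a * M ^ 2 * e ^ 2 + c * e ^ 4 := by
  obtain ⟨g, t, hg, rfl⟩ := exists_eq_squarefree_mul_sq x
  have hgx : IsSquare (g * (g * t ^ 2)) := ⟨g * t, by ring⟩
  obtain ⟨hgq, ht⟩ : (g : ℚ) ≠ 0 ∧ t ≠ 0 := by simpa using hx
  have hg0 : g ≠ 0 := mod_cast hgq
  have hden : (t.den : ℚ) ≠ 0 := mod_cast t.den_ne_zero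
  have hnum : (t.num : ℚ) = t * t.den := (Rat.mul_den_eq_num t).symm
  have hz : (g : ℚ) * (y * t.den ^ 2 / (g * t)) ^ 2 =
      (g ^ 2 * t.num ^ 4 + a * g * t.num ^ 2 * t.den ^ 2 + b * t.den ^ 4 : ℤ) := by
    push_cast
    rw [hnum]
    field_simp
    linear_combination h
  obtain ⟨N, hN⟩ := exists_int_eq_of_squarefree_mul_sq hg hz
  rw [hN] at hz
  replace hz : g * N ^ 2 =
      g ^ 2 * t.num ^ 4 + a * g * t.num ^ 2 * (t.den : ℤ) ^ 2 + b * (t.den : ℤ) ^ 4 := mod_cast hz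
  obtain ⟨c, rfl⟩ := squarefree_dvd_of_mul_sq_eq hg t.isCoprime_num_den hg0 hz
  exact ⟨g, c, N, t.num, t.den, hg, rfl, hgx, t.isCoprime_num_den,
    mul_left_cancel₀ hg0 (by linear_combination hz)⟩

lemma not_isCoprime_of_forall_zmod {p : ℕ} (hp : p.Prime) {A B C N M e : ℤ}
    (hloc : ∀ N M e : ZMod (p ^ 2),
      N ^ 2 = (A : ZMod _) * M ^ 4 + (B : ZMod _) * M ^ 2 * e ^ 2 + (C : ZMod _) * e ^ 4 →
        p * M = 0 ∧ p * e = 0)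
    (h : N ^ 2 = A * M ^ 4 + B * M ^ 2 * e ^ 2 + C * e ^ 4) : ¬ IsCoprime M e := by
  have hdvd {k : ℤ} (hk : ((p * k : ℤ) : ZMod (p ^ 2)) = 0) : (p : ℤ) ∣ k := by
    rw [ZMod.intCast_zmod_eq_zero_iff_dvd, Nat.cast_pow, sq] at hk
    exact Int.dvd_of_mul_dvd_mul_left (mod_cast hp.ne_zero) hk
  obtain ⟨hM, he⟩ := hloc N M e (by simpa using congr((($h : ℤ) : ZMod (p ^ 2))))
  exact fun hMe ↦ (Nat.prime_iff_prime_int.mp hp).not_isUnit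
    (hMe.isUnit_of_dvd' (hdvd (mod_cast hM)) (hdvd (mod_cast he)))

end Descent

lemma padicValRat_pow_add {p n : ℕ} [Fact p.Prime] {r c : ℚ} (hr : r ≠ 0) (hc : c ≠ 0)
    (hdvd : ¬ (n : ℤ) ∣ padicValRat p c) (h : r ^ n + c ≠ 0) :
    padicValRat p (r ^ n + c) = min (n * padicValRat p r) (padicValRat p c) := by
  have hpow : padicValRat p (r ^ n) = n * padicValRat p r := padicValRat.pow r
  rw [padicValRat.add_eq_min h (pow_ne_zero n hr) hc fun heq ↦ hdvd ⟨_, heq ▸ hpow⟩, hpow]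

/-! ### The curve 576.e2 -/

namespace E576e2
open WeierstrassCurve WeierstrassCurve.Affine WeierstrassCurve.Affine.Point

/-- The model `y² = x(x² + 12x - 12)` of the curve, with the rational point of order two moved from
`(4, 0)` to the origin. -/
abbrev shift : Affine ℚ := twoTorsionCurve 12 (-12)

lemma shift_eq_variableChange : shift = (⟨1, 4, 0, 0⟩ : VariableChange ℚ) • E576e2 := by
  ext <;> norm_num [twoTorsionCurve, E576e2, variableChange_def]

lemma nonempty_point_addEquiv_shift : Nonempty (E576e2.Point ≃+ shift.Point) := by
  rw [shift_eq_variableChange]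
  exact ⟨(AddEquiv.ofBijective _ (variableChangePointHom_bijective _ _)).symm⟩

instance : shift.IsElliptic := ⟨by rw [twoTorsionCurve_Δ]; norm_num⟩

lemma equation_shift {x y : ℚ} : shift.Equation x y ↔ y ^ 2 = x * (x ^ 2 + 12 * x - 12) := by
  rw [equation_twoTorsionCurve, ← sub_eq_add_neg]

/-- The point `(0, 0)` of order two on the shifted model. -/
abbrev torsionPoint : shift.Point := twoTorsionPoint 12 (-12)

/-- The point `(-2, 8)` of infinite order on the shifted model. -/
def nontorsionPoint : shift.Point := .mk (x := -2) (y := 8) (by norm_num [equation_shift])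

lemma eq_of_dvd_six {g : ℤ} (hg : g ∣ 6) :
    g = 1 ∨ g = -1 ∨ g = 2 ∨ g = -2 ∨ g = 3 ∨ g = -3 ∨ g = 6 ∨ g = -6 := by
  have hle := Int.natAbs_le_of_dvd_ne_zero hg (by norm_num)
  have hdvd := Int.natAbs_dvd_natAbs.mpr hg
  interval_cases h : g.natAbs <;> omega

lemma isSquare_X_or_isSquare_mul_X {x y : ℚ} (hx : x ≠ 0) (h : y ^ 2 = x * (x ^ 2 + 12 * x - 12)) :
    IsSquare x ∨ IsSquare (-2 * x) ∨ IsSquare (-3 * x) ∨ IsSquare (6 * x) := by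
  obtain ⟨g, c, N, M, e, hg, hgc, hsq, hMe, hN⟩ := exists_twoCovering (a := 12) (b := -12) (y := y)
    hx (by push_cast; linear_combination h)
  have hg6 : g ∣ 6 := (hg.dvd_pow_iff_dvd two_ne_zero).mp ((Dvd.intro c hgc).trans (by norm_num))
  rcases eq_of_dvd_six hg6 with rfl | rfl | rfl | rfl | rfl | rfl | rfl | rfl
  · exact .inl (by simpa using hsq)
  · obtain rfl : c = 12 := by omega
    exact absurd hMe (not_isCoprime_of_forall_zmod Nat.prime_three (by decide +kernel) hN)
  · obtain rfl : c = -6 := by omega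
    exact absurd hMe (not_isCoprime_of_forall_zmod Nat.prime_three (by decide +kernel) hN)
  · exact .inr <| .inl <| mod_cast hsq
  · obtain rfl : c = -4 := by omega
    exact absurd hMe (not_isCoprime_of_forall_zmod Nat.prime_three (by decide +kernel) hN)
  · exact .inr <| .inr <| .inl <| mod_cast hsq
  · exact .inr <| .inr <| .inr <| mod_cast hsq
  · obtain rfl : c = 2 := by omega
    exact absurd hMe (not_isCoprime_of_forall_zmod Nat.prime_three (by decide +kernel) hN)

lemma isSquare_X_or_isSquare_three_mul_X {x y : ℚ} (hx : x ≠ 0)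
    (h : y ^ 2 = x * (x ^ 2 - 24 * x + 192)) :
    IsSquare x ∨ IsSquare (3 * x) := by
  obtain ⟨g, c, N, M, e, hg, hgc, hsq, hMe, hN⟩ := exists_twoCovering (a := -24) (b := 192) (y := y)
    hx (by push_cast; linear_combination h)
  have hg6 : g ∣ 6 := (hg.dvd_pow_iff_dvd (n := 6) (by norm_num)).mp
    ((Dvd.intro c hgc).trans (by norm_num))
  have hx0 : 0 < x := by
    have : 0 < x ^ 2 - 24 * x + 192 := by nlinarith [sq_nonneg (x - 12)]
    exact lt_of_le_of_ne (nonneg_of_mul_nonneg_left (h ▸ sq_nonneg y) this) hx.symm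
  have hg0 : 0 ≤ g := by exact_mod_cast nonneg_of_mul_nonneg_left hsq.nonneg hx0
  rcases eq_of_dvd_six hg6 with rfl | rfl | rfl | rfl | rfl | rfl | rfl | rfl
  any_goals norm_num at hg0
  · exact .inl (by simpa using hsq)
  · obtain rfl : c = 96 := by omega
    exact absurd hMe (not_isCoprime_of_forall_zmod Nat.prime_three (by decide +kernel) hN)
  · exact .inr (mod_cast hsq)
  · obtain rfl : c = 32 := by omega
    exact absurd hMe (not_isCoprime_of_forall_zmod Nat.prime_three (by decide +kernel) hN)

lemma exists_add_self_eq_of_isSquare {x y : ℚ} (h : shift.Nonsingular x y) (hx : x ≠ 0)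
    (hsq : IsSquare x) : ∃ R, R + R = some x y h := by
  obtain ⟨s, rfl⟩ := isSquare_iff_exists_sq _ |>.mp hsq
  have hs : s ≠ 0 := by simpa using hx
  obtain ⟨t, rfl⟩ : ∃ t, y = s * t := ⟨y / s, by field_simp⟩
  have ht : t ^ 2 = s ^ 4 + 12 * s ^ 2 + -12 :=
    mul_left_cancel₀ hx (by linear_combination equation_shift.mp h.left)
  have huu' : (2 * s ^ 2 + 12 + 2 * t) * (2 * s ^ 2 + 12 - 2 * t) = 192 := by
    linear_combination -4 * ht
  -- `(u, 2su)` lies on the 2-isogenous curve `y² = x(x² - 24x + 192)`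
  obtain ⟨u, hu⟩ : ∃ u, u = 2 * s ^ 2 + 12 + 2 * t := ⟨_, rfl⟩
  rw [← hu] at huu'
  have hu0 : u ≠ 0 := left_ne_zero_of_mul_eq_one (b := (2 * s ^ 2 + 12 - 2 * t) / 192) (by linarith)
  have hdual : (2 * s * u) ^ 2 = u * (u ^ 2 - 24 * u + 192) := by
    linear_combination u * huu' - u ^ 2 * hu
  rcases isSquare_X_or_isSquare_three_mul_X hu0 hdual with ⟨w, hw⟩ | ⟨w, hw⟩
  · exact exists_add_self_eq (w := w) h ht (by linear_combination hu - hw)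
  · have hw0 : w ≠ 0 := by
      rintro rfl
      simp [hu0] at hw
    have hneg : shift.Nonsingular ((-s) ^ 2) (-s * -t) := by rwa [neg_sq, neg_mul_neg]
    simpa only [neg_sq, neg_mul_neg] using exists_add_self_eq (w := 24 / w) hneg
      (by linear_combination ht)
      (by field_simp; rw [sq w, ← hw]; linear_combination -3 * huu')

/-- The subgroup `2A + ⟨T, G⟩` of the Mordell–Weil group `A` of the shifted model, where
`T = (0, 0)` and `G = (-2, 8)`. The descent shows that it is everything. -/
def descentSubgroup : AddSubgroup shift.Point :=
  (nsmulAddMonoidHom (α := shift.Point) 2).range ⊔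
    AddSubgroup.closure {torsionPoint, nontorsionPoint}

lemma torsionPoint_mem_descentSubgroup : torsionPoint ∈ descentSubgroup :=
  AddSubgroup.mem_sup_right (AddSubgroup.subset_closure (by simp))

lemma nontorsionPoint_mem_descentSubgroup : nontorsionPoint ∈ descentSubgroup :=
  AddSubgroup.mem_sup_right (AddSubgroup.subset_closure (by simp))

lemma mem_descentSubgroup_of_isSquare {x y : ℚ} (h : shift.Nonsingular x y) (hsq : IsSquare x) :
    some x y h ∈ descentSubgroup := by
  obtain rfl | hx := eq_or_ne x 0
  · exact eq_twoTorsionPoint h ▸ torsionPoint_mem_descentSubgroup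
  · obtain ⟨R, hR⟩ := exists_add_self_eq_of_isSquare h hx hsq
    exact AddSubgroup.mem_sup_left ⟨R, (two_nsmul R).trans hR⟩

lemma mem_descentSubgroup_of_isSquare_neg_two_mul {x y : ℚ} (h : shift.Nonsingular x y) (hx : x ≠ 0)
    (hsq : IsSquare (-2 * x)) : some x y h ∈ descentSubgroup := by
  rw [← add_mem_cancel_right nontorsionPoint_mem_descentSubgroup]
  rcases hadd : some x y h + nontorsionPoint with _ | ⟨x', y', h'⟩
  · exact zero_mem _
  · refine mem_descentSubgroup_of_isSquare h' ?_
    have := (isSquare_mul_X_of_add_eq hadd).div hsq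
    rwa [mul_comm x, mul_div_cancel_left₀ _ (mul_ne_zero (by norm_num) hx)] at this

lemma mem_descentSubgroup (P : shift.Point) : P ∈ descentSubgroup := by
  rcases P with _ | ⟨x, y, h⟩
  · exact zero_mem _
  obtain rfl | hx := eq_or_ne x 0
  · exact mem_descentSubgroup_of_isSquare h .zero
  obtain ⟨y', h', hT⟩ := exists_add_twoTorsionPoint_eq h hx
  rcases isSquare_X_or_isSquare_mul_X hx (equation_shift.mp h.left) with hsq | hsq | hsq | hsq
  · exact mem_descentSubgroup_of_isSquare h hsq
  · exact mem_descentSubgroup_of_isSquare_neg_two_mul h hx hsq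
  · have hsq' : IsSquare (-12 / x) := by
      convert! hsq.mul (.sq (2 / x)) using 1
      field_simp
      norm_num
    rw [← add_mem_cancel_right torsionPoint_mem_descentSubgroup, hT]
    exact mem_descentSubgroup_of_isSquare h' hsq'
  · have hsq' : IsSquare (-2 * (-12 / x)) := by
      convert! hsq.mul (.sq (2 / x)) using 1
      field_simp
      norm_num
    rw [← add_mem_cancel_right torsionPoint_mem_descentSubgroup, hT]
    exact mem_descentSubgroup_of_isSquare_neg_two_mul h' (div_ne_zero (by norm_num) hx) hsq'

lemma Y_ne_zero {x y : ℚ} (h : shift.Nonsingular x y) (hx : x ≠ 0) : y ≠ 0 := by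
  rintro rfl
  refine (by norm_num : ¬ IsSquare (48 : ℚ)) ⟨x + 6, mul_left_cancel₀ hx ?_⟩
  linear_combination equation_shift.mp h.left

lemma exists_add_self_eq_isSquare {x y : ℚ} (h : shift.Nonsingular x y) (hx : x ≠ 0) :
    ∃ x' y' h', some x y h + some x y h = some x' y' h' ∧ x' ≠ 0 ∧ IsSquare x' ∧
      (2 * y) ^ 2 * x' = (x ^ 2 + 12) ^ 2 := by
  have hy := Y_ne_zero h hx
  have hneg : y ≠ shift.negY x y := fun hneg ↦
    hy (self_eq_neg.mp (hneg.trans (negY_twoTorsionCurve x y)))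
  obtain ⟨x', y', h', hadd⟩ : ∃ x' y' h', some x y h + some x y h = some x' y' h' :=
    ⟨_, _, _, add_self_of_Y_ne hneg⟩
  have hdouble : (2 * y) ^ 2 * x' = (x ^ 2 + 12) ^ 2 := by
    rw [sq_mul_X_of_add_self_eq hadd, sub_neg_eq_add]
  obtain rfl : x' = ((x ^ 2 + 12) / (2 * y)) ^ 2 := by
    field_simp
    linear_combination hdouble
  exact ⟨_, y', h', hadd, by positivity, .sq _, hdouble⟩

lemma padicValRat_two_twelve : padicValRat 2 12 = 2 :=
  (padicValRat.of_nat (n := 12)).trans (by decide +kernel)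

lemma two_mul_padicValRat_two_Y {r y : ℚ} (hr : r ≠ 0) (hy : y ≠ 0)
    (h : y ^ 2 = r ^ 2 * (r ^ 4 + -12 + 12 * r ^ 2)) :
    2 * padicValRat 2 y = 2 * padicValRat 2 r + min (4 * padicValRat 2 r) 2 := by
  have hr2 : r ^ 2 ≠ 0 := pow_ne_zero 2 hr
  have hsub : r ^ 4 + -12 ≠ 0 := fun h0 ↦
    (by norm_num : ¬ IsSquare (12 : ℚ)) ⟨r ^ 2, by linear_combination -h0⟩
  have hquad : r ^ 4 + -12 + 12 * r ^ 2 ≠ 0 := right_ne_zero_of_mul (h ▸ pow_ne_zero 2 hy)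
  have hvlin : padicValRat 2 (12 * r ^ 2) = 2 + 2 * padicValRat 2 r := by
    rw [padicValRat.mul (by norm_num) hr2, padicValRat_two_twelve, padicValRat.pow, Nat.cast_ofNat]
  have hvsub : padicValRat 2 (r ^ 4 + -12) = min (4 * padicValRat 2 r) 2 := by
    have hv12 : padicValRat 2 (-12) = 2 := by rw [padicValRat.neg, padicValRat_two_twelve]
    rw [padicValRat_pow_add hr (by norm_num) (by rw [hv12]; norm_num) hsub, hv12, Nat.cast_ofNat]
  have hvquad : padicValRat 2 (r ^ 4 + -12 + 12 * r ^ 2) = min (4 * padicValRat 2 r) 2 := by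
    rw [padicValRat.add_eq_of_lt hquad hsub (mul_ne_zero (by norm_num) hr2) (by omega), hvsub]
  have hv := congr(padicValRat 2 $h)
  rwa [padicValRat.mul hr2 hquad, padicValRat.pow, padicValRat.pow, hvquad] at hv

lemma padicValRat_two_X_lt {x y x' : ℚ} (hx : x ≠ 0) (hsq : IsSquare x) (hy : y ≠ 0)
    (h : y ^ 2 = x * (x ^ 2 + 12 * x - 12)) (hx' : (2 * y) ^ 2 * x' = (x ^ 2 + 12) ^ 2) :
    padicValRat 2 x' < padicValRat 2 x := by
  obtain ⟨r, rfl⟩ := (isSquare_iff_exists_sq _).mp hsq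
  have hr : r ≠ 0 := by simpa using hx
  have hadd : r ^ 4 + 12 ≠ 0 := by positivity
  replace hx' : (2 * y) ^ 2 * x' = (r ^ 4 + 12) ^ 2 := by linear_combination hx'
  have hx'0 : x' ≠ 0 := right_ne_zero_of_mul (hx' ▸ pow_ne_zero 2 hadd)
  have hvy := two_mul_padicValRat_two_Y hr hy (by linear_combination h)
  have hvadd : padicValRat 2 (r ^ 4 + 12) = min (4 * padicValRat 2 r) 2 := by
    rw [padicValRat_pow_add hr (by norm_num) (by rw [padicValRat_two_twelve]; norm_num) hadd,
      padicValRat_two_twelve, Nat.cast_ofNat]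
  have hvx' : 2 * (1 + padicValRat 2 y) + padicValRat 2 x' = 2 * min (4 * padicValRat 2 r) 2 := by
    have hv := congr(padicValRat 2 $hx')
    rwa [padicValRat.mul (pow_ne_zero 2 (mul_ne_zero two_ne_zero hy)) hx'0,
      padicValRat.pow, padicValRat.pow, hvadd, padicValRat.mul two_ne_zero hy,
      show padicValRat 2 2 = 1 from padicValRat.self one_lt_two] at hv
  rw [padicValRat.pow, Nat.cast_ofNat]
  omega

lemma not_isOfFinAddOrder_of_isSquare {x y : ℚ} (h : shift.Nonsingular x y) (hx : x ≠ 0)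
    (hsq : IsSquare x) : ¬ IsOfFinAddOrder (some x y h) := by
  refine not_isOfFinAddOrder_of_add_self_lt
    (S := {P | ∃ x y h, P = some x y h ∧ x ≠ 0 ∧ IsSquare x})
    (fun P ↦ padicValRat 2 (P.xRep 0)) ?_ ⟨x, y, h, rfl, hx, hsq⟩
  rintro _ ⟨x, y, h, rfl, hx, hsq⟩
  obtain ⟨x', y', h', hadd, hx', hsq', hdouble⟩ := exists_add_self_eq_isSquare h hx
  rw [hadd]
  exact ⟨⟨x', y', h', rfl, hx', hsq'⟩, padicValRat_two_X_lt hx hsq (Y_ne_zero h hx)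
    (equation_shift.mp h.left) hdouble⟩

lemma isOfFinAddOrder_iff {P : shift.Point} : IsOfFinAddOrder P ↔ P = 0 ∨ P = torsionPoint := by
  constructor
  · intro hP
    rcases P with _ | ⟨x, y, h⟩
    · exact .inl rfl
    obtain rfl | hx := eq_or_ne x 0
    · exact .inr (eq_twoTorsionPoint h)
    obtain ⟨x', y', h', hadd, hx', hsq, -⟩ := exists_add_self_eq_isSquare h hx
    exact absurd (hadd ▸ hP.add hP) (not_isOfFinAddOrder_of_isSquare h' hx' hsq)
  · rintro (rfl | rfl)
    · exact .zero
    · exact isOfFinAddOrder_iff_nsmul_eq_zero.mpr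
        ⟨2, two_pos, (two_nsmul _).trans twoTorsionPoint_add_self⟩

lemma mem_torsion_iff {P : shift.Point} :
    P ∈ Submodule.torsion ℤ shift.Point ↔ P = 0 ∨ P = torsionPoint := by
  rw [← isOfFinAddOrder_iff, ← Submodule.mem_toAddSubgroup, Submodule.torsion_int]
  rfl

lemma nonempty_torsion_addEquiv : Nonempty (Submodule.torsion ℤ shift.Point ≃+ ZMod 2) := by
  have hset : (Submodule.torsion ℤ shift.Point : Set shift.Point) = {0, torsionPoint} :=
    Set.ext fun P ↦ mem_torsion_iff
  have hcard : Nat.card (Submodule.torsion ℤ shift.Point) = 2 := by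
    rw [← SetLike.coe_sort_coe, hset, Nat.card_coe_set_eq]
    exact Set.ncard_pair (some_ne_zero _).symm
  exact ⟨addEquivOfPrimeCardEq (p := 2) hcard (Nat.card_zmod 2)⟩

lemma nontorsionPoint_notMem_torsion : nontorsionPoint ∉ Submodule.torsion ℤ shift.Point := by
  rw [mem_torsion_iff]
  rintro (h | h)
  · exact some_ne_zero _ h
  · exact absurd ((some.injEq ..).mp h).1 (by norm_num)

lemma finite_point_shift : Module.Finite ℤ shift.Point := by
  have hfi := finiteIndex_range_nsmul_of_sup_closure_eq_top two_ne_zero (Set.toFinite _)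
    (eq_top_iff.mpr fun P _ ↦ mem_descentSubgroup P)
  exact Module.Finite.iff_addGroup_fg.mpr (fg_point_of_finiteIndex hfi)

lemma exists_eq_smul_add_smul_add (P : shift.Point) : ∃ (n : ℤ) (Q t : shift.Point),
    t ∈ Submodule.torsion ℤ shift.Point ∧ P = n • nontorsionPoint + (2 : ℤ) • Q + t := by
  obtain ⟨_, ⟨Q, rfl⟩, _, hz, rfl⟩ := AddSubgroup.mem_sup.mp (mem_descentSubgroup P)
  obtain ⟨m, n, rfl⟩ := AddSubgroup.mem_closure_pair.mp hz
  refine ⟨n, Q, m • torsionPoint, Submodule.smul_mem _ m (mem_torsion_iff.mpr (.inr rfl)), ?_⟩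
  rw [nsmulAddMonoidHom_apply, ofNat_zsmul]
  abel

end E576e2

/-- The Mordell–Weil group `E(ℚ)` of the elliptic curve
`y² = x³ − 60x + 176` over `ℚ` (LMFDB 576.e2) is isomorphic as an abelian group to
`ℤ × ℤ/2ℤ`. -/
theorem mordellWeil_576e2 : Nonempty (E576e2.Point ≃+ ℤ × ZMod 2) := by
  obtain ⟨eShift⟩ := E576e2.nonempty_point_addEquiv_shift
  obtain ⟨eTors⟩ := E576e2.nonempty_torsion_addEquiv
  have := E576e2.finite_point_shift
  obtain ⟨eRank⟩ := nonempty_equiv_prod_torsion Int.prime_two.not_isUnit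
    E576e2.nontorsionPoint_notMem_torsion E576e2.exists_eq_smul_add_smul_add
  exact ⟨eShift.trans <| eRank.toAddEquiv.trans <|
    (eTors.prodCongr (.refl ℤ)).trans AddEquiv.prodComm⟩
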